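/- arXiv:1305.6330 — 2 statements merged into one kernel-verified Lean document; each statement's English description precedes it below -/
import Mathlib

section
/- Let 𝒜 be an abelian category. Suppose given a commutative diagram in 𝒜 with exact rows 0 → K' → B' →^{p'} A' → 0 and 0 → K → B →^{p} A → 0, together with vertical morphisms κ : K' → K, β : B' → B and α : A' → A making the diagram commute, such that κ is an isomorphism. Then the sequence 0 → B' → B ⊕ A' → A → 0 is exact, where the first map has components β and p', and the second map sends a pair (x, y) to p(x) − α(y). -/
/-!
The sequence says that the right-hand square is a pullback (exactness at `B'` and in the middle)
and that `B ⊞ A' ⟶ A` is epi, which already holds on the summand `B`. An element of `B'` killed by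
`p'` and `β` comes from `K'` and dies under the monomorphism `κ ≫ i`, hence is zero. A pair `(b, a)`
with `p b = α a` lifts locally: choose a preimage `y` of `a` under `p'`, then correct it by the
element of `K'` which `κ` sends to `b - β y`, an element of `K = ker p`. "Elements" and
"preimages" are taken up to epimorphic refinement.
-/

open CategoryTheory CategoryTheory.Limits

/-- A morphism of short exact sequences in an abelian category whose map on kernels is an
isomorphism induces a short exact "Mayer–Vietoris" sequence `0 → B' → B ⊞ A' → A → 0`. -/
theorem statement0 {𝒜 : Type*} [Category 𝒜] [Abelian 𝒜]
    {K' B' A' K B A : 𝒜}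
    (i' : K' ⟶ B') (p' : B' ⟶ A') (i : K ⟶ B) (p : B ⟶ A)
    (κ : K' ⟶ K) (β : B' ⟶ B) (α : A' ⟶ A)
    (w' : i' ≫ p' = 0) (w : i ≫ p = 0)
    (h' : (ShortComplex.mk i' p' w').ShortExact)
    (h : (ShortComplex.mk i p w).ShortExact)
    (comm1 : i' ≫ β = κ ≫ i)
    (comm2 : β ≫ p = p' ≫ α)
    (hκ : IsIso κ) :
    (ShortComplex.mk (biprod.lift β p') (biprod.desc p (-α))
      (by rw [biprod.lift_desc, Preadditive.comp_neg, comm2, add_neg_cancel])).ShortExact := by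
  have hi' : Mono i' := h'.mono_f
  have hp' : Epi p' := h'.epi_g
  have hi : Mono i := h.mono_f
  have hp : Epi p := h.epi_g
  refine { exact := ?_, mono_f := ?_, epi_g := ?_ }
  · rw [ShortComplex.exact_iff_exact_up_to_refinements]
    intro T x hx
    change T ⟶ B ⊞ A' at x
    replace hx : x ≫ biprod.desc p (-α) = 0 := hx
    have hx' : (x ≫ biprod.fst) ≫ p = (x ≫ biprod.snd) ≫ α := by
      rw [biprod.desc_eq, Preadditive.comp_add, Preadditive.comp_neg, Preadditive.comp_neg,
        add_neg_eq_zero] at hx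
      simpa using hx
    -- After an epimorphic refinement `π`, the `A'`-component lifts along `p'` to some `y`;
    -- the defect of the `B`-component is then killed by `p`, so it is corrected through `κ⁻¹`.
    obtain ⟨T', π, hπ, y, hy⟩ := surjective_up_to_refinements_of_epi p' (x ≫ biprod.snd)
    have hz : (π ≫ x ≫ biprod.fst - y ≫ β) ≫ p = 0 := by
      rw [Preadditive.sub_comp, sub_eq_zero, Category.assoc, Category.assoc y, comm2, hx',
        ← Category.assoc, hy, Category.assoc]
    obtain ⟨z, hz'⟩ : ∃ z, z ≫ i = π ≫ x ≫ biprod.fst - y ≫ β :=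
      ⟨h.exact.lift _ hz, h.exact.lift_f _ hz⟩
    refine ⟨T', π, hπ, y + z ≫ inv κ ≫ i', ?_⟩
    dsimp
    apply biprod.hom_ext
    · simp [comm1, hz']
    · simp [w', hy]
  · refine Preadditive.mono_of_cancel_zero _ fun {T} f hf => ?_
    dsimp at f hf
    have hβ : f ≫ β = 0 := by simpa using hf =≫ biprod.fst
    have hp0 : f ≫ p' = 0 := by simpa using hf =≫ biprod.snd
    obtain ⟨g, rfl⟩ : ∃ g, g ≫ i' = f := ⟨h'.exact.lift _ hp0, h'.exact.lift_f _ hp0⟩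
    have hg : g ≫ κ ≫ i = 0 := by rw [← comm1, ← Category.assoc, hβ]
    rw [zero_of_comp_mono (κ ≫ i) hg, zero_comp]
  · exact epi_of_epi_fac (biprod.inl_desc p (-α))
end

section
/- Let k be a field and let B be a principal ideal domain which is a k-algebra such that B has exactly b maximal ideals with b ≥ 2 finite, and such that for every maximal ideal m of B the composite ring homomorphism k → B → B/m is bijective. Let J be the Jacobson radical of B (the intersection of all maximal ideals of B) and let A = { x ∈ B : ∃ c ∈ k, x − (algebraMap k B) c ∈ J }, a subring of B containing the image of k. Let s₀ ∈ B be nonzero and suppose that J ⊆ s₀ • A, i.e. every element of J is of the form s₀ * a with a ∈ A. Then s₀ is a unit of B, and the quotient k-vector space B / (s₀ • A) has dimension b − 1 over k. -/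
/-!
Let `φ : B → ∏ B/m` be the reduction map at all maximal ideals. By the Chinese remainder theorem it
is surjective; its kernel is the Jacobson radical `J`, and `A = k + J` is the preimage of the line
of constants, so `B / A` has dimension `b - 1`.

For the unit claim, write `J = (t)`, where `t ≠ 0` because `∏ B/m` is not a domain when `b ≥ 2`.
Writing `t = s₀ a` with `a ∈ A`, the hypothesis `t B ⊆ s₀ A` gives `a B ⊆ A` after cancelling `s₀`.
An element of `A` lying in one maximal ideal lies in all of them, so applying this to `a x` with
`x ∈ m₁ \ m₂` forces `a ∈ J`. Hence `a = t u`, and `t = s₀ t u` makes `s₀` a unit.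
Multiplication by `s₀` is then an automorphism of `B`, and `B / s₀ A ≅ B / A`.
-/

/-- The subring `A = k + J` of `B` (`J` the Jacobson radical of `B`), i.e. the set of
`x ∈ B` which are congruent to a constant from `k` modulo `J`, viewed as a `k`-submodule
of `B`.  It is the local ring of an ordinary fold singularity. -/
def foldSub (k B : Type*) [Field k] [CommRing B] [Algebra k B] : Submodule k B where
  carrier := {x | ∃ c : k, x - algebraMap k B c ∈ Ideal.jacobson (⊥ : Ideal B)}
  zero_mem' := ⟨0, by simp⟩
  add_mem' := by
    rintro x y ⟨c, hc⟩ ⟨c', hc'⟩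
    refine ⟨c + c', ?_⟩
    have h : x + y - algebraMap k B (c + c')
        = (x - algebraMap k B c) + (y - algebraMap k B c') := by
      rw [map_add]; ring
    rw [h]
    exact Ideal.add_mem _ hc hc'
  smul_mem' := by
    rintro c x ⟨c', hc'⟩
    refine ⟨c * c', ?_⟩
    have h : c • x - algebraMap k B (c * c')
        = algebraMap k B c * (x - algebraMap k B c') := by
      rw [map_mul, Algebra.smul_def]; ring
    rw [h]
    exact Ideal.mul_mem_left _ _ hc'

/-- Reduction modulo all maximal ideals at once. -/
def foldRed (k B : Type*) [Field k] [CommRing B] [Algebra k B] :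
    B →ₗ[k] ((m : {I : Ideal B // I.IsMaximal}) → B ⧸ m.1) :=
  LinearMap.pi fun m => (Ideal.Quotient.mkₐ k m.1).toLinearMap

section

variable {k B : Type*} [Field k] [CommRing B] [Algebra k B]

theorem mem_jacobson_iff_forall_maximal (x : B) :
    x ∈ Ideal.jacobson (⊥ : Ideal B) ↔ ∀ m : Ideal B, m.IsMaximal → x ∈ m := by
  simp [Ideal.jacobson]

theorem pairwise_coprime_maximal : Pairwise (Function.onFun IsCoprime
    fun m : {I : Ideal B // I.IsMaximal} => m.1) := by
  intro m n hmn
  exact Ideal.isCoprime_iff_sup_eq.mpr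
    (m.2.coprime_of_ne n.2 fun h => hmn (Subtype.ext h))

theorem foldRed_surjective [Finite {I : Ideal B // I.IsMaximal}] :
    Function.Surjective (foldRed k B) := by
  intro y
  obtain ⟨x, hx⟩ := Ideal.pi_quotient_surjective pairwise_coprime_maximal y
  exact ⟨x, funext hx⟩

theorem mem_foldSub_iff (x : B) :
    x ∈ foldSub k B ↔ foldRed k B x ∈ Submodule.span k {foldRed k B 1} := by
  rw [Submodule.mem_span_singleton]
  refine exists_congr fun c => ?_
  rw [mem_jacobson_iff_forall_maximal, ← map_smul, ← Algebra.algebraMap_eq_smul_one]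
  constructor
  · intro h
    funext m
    exact ((Ideal.Quotient.mk_eq_mk_iff_sub_mem _ _).mpr (h m.1 m.2)).symm
  · intro h m hm
    exact (Ideal.Quotient.mk_eq_mk_iff_sub_mem _ _).mp (congrFun h ⟨m, hm⟩).symm

/-- The ring `A = k + J` is local with maximal ideal `J`: an element of `A` lying in one maximal
ideal of `B` has constant term zero, hence lies in all of them. -/
theorem mem_jacobson_of_mem_foldSub {x : B} (hx : x ∈ foldSub k B) {m : Ideal B}
    (hm : m.IsMaximal) (hxm : x ∈ m) : x ∈ Ideal.jacobson (⊥ : Ideal B) := by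
  obtain ⟨c, hc⟩ := hx
  have hcm : algebraMap k B c ∈ m := by
    have := m.sub_mem hxm ((mem_jacobson_iff_forall_maximal _).mp hc m hm)
    simpa using this
  have hc0 : c = 0 := by
    by_contra h
    exact hm.ne_top (Ideal.eq_top_of_isUnit_mem _ hcm ((IsUnit.mk0 c h).map _))
  simpa [hc0] using hc

theorem jacobson_ne_bot [IsDomain B] [Finite {I : Ideal B // I.IsMaximal}]
    {m n : {I : Ideal B // I.IsMaximal}} (hmn : m ≠ n) :
    Ideal.jacobson (⊥ : Ideal B) ≠ ⊥ := by
  classical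
  intro h
  -- Lifts of two orthogonal idempotents of the product are zero divisors modulo `J`.
  have lift (p : {I : Ideal B // I.IsMaximal}) :
      ∃ x : B, x ∉ p.1 ∧ ∀ q : {I : Ideal B // I.IsMaximal}, q ≠ p → x ∈ q.1 := by
    obtain ⟨x, hx⟩ := Ideal.pi_quotient_surjective
      (pairwise_coprime_maximal (B := B)) (Pi.single p 1)
    refine ⟨x, fun hxp => ?_, fun q hq => ?_⟩
    · have h1 : Ideal.Quotient.mk p.1 x = _ := hx p
      rw [Ideal.Quotient.eq_zero_iff_mem.mpr hxp, Pi.single_eq_same] at h1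
      exact p.2.ne_top ((Ideal.eq_top_iff_one _).mpr (Ideal.Quotient.eq_zero_iff_mem.mp h1.symm))
    · have h1 := hx q
      rw [Pi.single_eq_of_ne hq] at h1
      exact Ideal.Quotient.eq_zero_iff_mem.mp h1
  obtain ⟨x, hxm, hx⟩ := lift m
  obtain ⟨y, hyn, hy⟩ := lift n
  have hxy : x * y ∈ Ideal.jacobson (⊥ : Ideal B) := by
    rw [mem_jacobson_iff_forall_maximal]
    intro q hq
    by_cases hqm : (⟨q, hq⟩ : {I : Ideal B // I.IsMaximal}) = m
    · exact q.mul_mem_left _ (hy ⟨q, hq⟩ (hqm ▸ hmn))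
    · exact q.mul_mem_right _ (hx ⟨q, hq⟩ hqm)
  rw [h, Ideal.mem_bot, mul_eq_zero] at hxy
  rcases hxy with h0 | h0
  · exact hxm (h0 ▸ m.1.zero_mem)
  · exact hyn (h0 ▸ n.1.zero_mem)

theorem isUnit_of_jacobson_le [IsDomain B] [IsPrincipalIdealRing B]
    [Finite {I : Ideal B // I.IsMaximal}] {m n : {I : Ideal B // I.IsMaximal}} (hmn : m ≠ n)
    {s : B} (hs : s ≠ 0)
    (hJ : ∀ x ∈ Ideal.jacobson (⊥ : Ideal B), ∃ a ∈ foldSub k B, x = s * a) : IsUnit s := by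
  obtain ⟨t, ht⟩ := (IsPrincipalIdealRing.principal (Ideal.jacobson (⊥ : Ideal B))).principal
  have htJ : t ∈ Ideal.jacobson (⊥ : Ideal B) := ht ▸ Ideal.mem_span_singleton_self t
  have ht0 : t ≠ 0 := by
    rintro rfl
    exact jacobson_ne_bot hmn (by rw [ht]; simp)
  obtain ⟨a, haA, hta⟩ := hJ t htJ
  obtain ⟨x, hxm, hxn⟩ : ∃ x ∈ m.1, x ∉ n.1 :=
    SetLike.not_le_iff_exists.mp fun hle => hmn (Subtype.ext (m.2.eq_of_le n.2.ne_top hle))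
  have haxA : a * x ∈ foldSub k B := by
    obtain ⟨a', ha', h⟩ := hJ (t * x) (Ideal.mul_mem_right _ _ htJ)
    have : a * x = a' := mul_left_cancel₀ hs (by rw [← h, hta, mul_assoc])
    exact this ▸ ha'
  have hax := (mem_jacobson_iff_forall_maximal _).mp
    (mem_jacobson_of_mem_foldSub haxA m.2 (m.1.mul_mem_left a hxm)) n.1 n.2
  have han : a ∈ n.1 := (n.2.isPrime.mem_or_mem hax).resolve_right hxn
  have haJ := mem_jacobson_of_mem_foldSub haA n.2 han
  rw [ht] at haJ
  obtain ⟨u, hu⟩ := Ideal.mem_span_singleton.mp haJ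
  refine IsUnit.of_mul_eq_one u (mul_left_cancel₀ ht0 ?_)
  rw [mul_one]
  nth_rewrite 2 [hta]
  rw [hu]
  ring

theorem finrank_pi_residue [Finite {I : Ideal B // I.IsMaximal}]
    (hres : ∀ m : Ideal B, m.IsMaximal → Function.Bijective (algebraMap k (B ⧸ m))) :
    Module.Finite k ((m : {I : Ideal B // I.IsMaximal}) → B ⧸ m.1) ∧
    Module.finrank k ((m : {I : Ideal B // I.IsMaximal}) → B ⧸ m.1)
      = Nat.card {I : Ideal B // I.IsMaximal} := by
  have := Fintype.ofFinite {I : Ideal B // I.IsMaximal}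
  let e : ((m : {I : Ideal B // I.IsMaximal}) → B ⧸ m.1) ≃ₗ[k]
      ({I : Ideal B // I.IsMaximal} → k) :=
    LinearEquiv.piCongrRight fun m =>
      (LinearEquiv.ofBijective (Algebra.linearMap k (B ⧸ m.1)) (hres m.1 m.2)).symm
  refine ⟨Module.Finite.equiv e.symm, ?_⟩
  rw [e.finrank_eq, Module.finrank_fintype_fun_eq_card, Nat.card_eq_fintype_card]

end

/-- Lemma 3.10 of the paper (`ComputeRank`), in its local-ring form: let `B` be a principal
ideal domain over a field `k` with exactly `b ≥ 2` maximal ideals, all with residue field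
`k`; let `J` be its Jacobson radical and `A = k + J` the local ring of the associated fold
singularity.  If `s₀ ∈ B` is nonzero and `J ⊆ s₀ • A`, then `s₀` is a unit and the
`k`-vector space `B / (s₀ • A)` has dimension `b - 1`. -/
theorem statement8 (k B : Type*) [Field k] [CommRing B] [IsDomain B]
    [IsPrincipalIdealRing B] [Algebra k B]
    (b : ℕ) (hb : 2 ≤ b)
    (hcard : Nat.card {I : Ideal B // I.IsMaximal} = b)
    (hres : ∀ m : Ideal B, m.IsMaximal → Function.Bijective (algebraMap k (B ⧸ m)))
    (s₀ : B) (hs₀ : s₀ ≠ 0)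
    (hJ : ∀ x ∈ Ideal.jacobson (⊥ : Ideal B), ∃ a ∈ foldSub k B, x = s₀ * a) :
    IsUnit s₀ ∧
      Module.finrank k (B ⧸ (foldSub k B).map (LinearMap.mulLeft k s₀)) = b - 1 := by
  have hfin : Finite {I : Ideal B // I.IsMaximal} :=
    Nat.finite_of_card_ne_zero (by omega)
  have hnt : Nontrivial {I : Ideal B // I.IsMaximal} :=
    Finite.one_lt_card_iff_nontrivial.mp (by omega)
  obtain ⟨m, n, hmn⟩ := exists_pair_ne {I : Ideal B // I.IsMaximal}
  have hu : IsUnit s₀ := isUnit_of_jacobson_le hmn hs₀ hJ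
  refine ⟨hu, ?_⟩
  obtain ⟨hF, hrank⟩ := finrank_pi_residue (k := k) hres
  obtain ⟨v, hv⟩ := hu.exists_left_inv
  set L := Submodule.span k {foldRed k B 1} with hL
  -- The quotient `B / s₀ A` is the image of `x ↦ φ (s₀⁻¹ x)` modulo constants.
  let ψ := L.mkQ ∘ₗ foldRed k B ∘ₗ LinearMap.mulLeft k v
  have hψ : Function.Surjective ψ := by
    refine L.mkQ_surjective.comp ((foldRed_surjective (k := k)).comp fun x => ⟨s₀ * x, ?_⟩)
    rw [LinearMap.mulLeft_apply, ← mul_assoc, hv, one_mul]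
  have hker : (foldSub k B).map (LinearMap.mulLeft k s₀) = LinearMap.ker ψ := by
    ext x
    have hx : x ∈ LinearMap.ker ψ ↔ v * x ∈ foldSub k B := by
      rw [mem_foldSub_iff, LinearMap.mem_ker]
      exact Submodule.Quotient.mk_eq_zero L
    rw [hx, Submodule.mem_map]
    constructor
    · rintro ⟨a, ha, rfl⟩
      rwa [LinearMap.mulLeft_apply, ← mul_assoc, hv, one_mul]
    · intro h
      refine ⟨v * x, h, ?_⟩
      rw [LinearMap.mulLeft_apply, ← mul_assoc, mul_comm s₀, hv, one_mul]
  have h1 : foldRed k B 1 ≠ 0 := by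
    intro h
    exact m.2.ne_top ((Ideal.eq_top_iff_one _).mpr
      (Ideal.Quotient.eq_zero_iff_mem.mp (congrFun h m)))
  rw [hker, (ψ.quotKerEquivOfSurjective hψ).finrank_eq, Submodule.finrank_quotient, hrank,
    hcard, hL, finrank_span_singleton h1]
end
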